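/- Let h : ℝ^d → ℝ be continuously differentiable, G-Lipschitz and L-smooth, and let r > 0. Define h^r(z) = E_{v̄ ∼ Uniform(B_d)}[h(z + r v̄)] and the two-point estimator G_h(z;r;v) = (d/r)(h(z + r v) − h(z)) · v. Then for every z ∈ ℝ^d the variance bound E_{v ∼ Uniform(S^{d−1})}[‖G_h(z;r;v) − ∇h^r(z)‖²] ≤ 9 d² G² / (d + 2) + 3 d² L² r² / 4 holds. -/

import Mathlib

set_option autoImplicit false

open MeasureTheory Metric
open scoped RealInnerProductSpace ENNReal

noncomputable section

/-- `ℝ^d` as a Euclidean space. -/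
abbrev Euc (n : ℕ) := EuclideanSpace ℝ (Fin n)

/-- The uniform (normalized Lebesgue) probability measure on the closed unit ball of `ℝ^d`. -/
def ballUniform (d : ℕ) : Measure (Euc d) :=
  (volume (closedBall (0 : Euc d) 1))⁻¹ • volume.restrict (closedBall (0 : Euc d) 1)

/-- The uniform (normalized surface) probability measure on the unit sphere of `ℝ^d`,
obtained by normalizing the surface measure `volume.toSphere` and pushing it forward to `ℝ^d`. -/
def sphereUniform (d : ℕ) : Measure (Euc d) :=
  ((volume : Measure (Euc d)).toSphere Set.univ)⁻¹ •
    Measure.map Subtype.val (volume : Measure (Euc d)).toSphere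

/-!
For `u` uniform in the unit ball and `v` uniform on the unit sphere, the divergence theorem reads
`E[∂_w f(u)] = d E[⟪v, w⟫ f(v)]`. Applied to `f(u) = (h(z + r u) - h(z)) / r`, it shows that the
two-point estimator has mean `∇h^r(z)`, so its variance is at most its second moment. Applied to
`f = ⟪g, ·⟫`, it gives `E[⟪g, v⟫²] = ‖g‖² / d`. On the sphere, Taylor's formula bounds the norm of
the estimator by `d (|⟪∇h(z), v⟫| + L r / 2)`, and `(a + b)² ≤ (3/2) a² + 3 b²` then bounds the
second moment by `(3/2) d ‖∇h(z)‖² + (3/4) d² L² r²`.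

The divergence theorem on balls comes from integration by parts against the Lipschitz tent
`(R - ‖x‖)⁺`, whose gradient is `-x / ‖x‖` on the ball of radius `R`: in polar coordinates the
result reads `∫₀ᴿ (R - t) c(t) dt = ∫₀ᴿ b(t) dt`, where `b(t)` and `c(t)` are the integrals over the
sphere of radius `t` of `⟪x / ‖x‖, w⟫ f` and `∂_w f`, and differentiating it in `R` gives
`b(R) = ∫₀ᴿ c(t) dt`.
-/

section Divergence

variable {E : Type*} [NormedAddCommGroup E] [InnerProductSpace ℝ E]

lemma hasFDerivAt_norm_of_ne_zero {x : E} (hx : x ≠ 0) :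
    HasFDerivAt (fun y : E => ‖y‖) (‖x‖⁻¹ • innerSL ℝ x) x := by
  have hsqrt := (hasStrictFDerivAt_norm_sq x).hasFDerivAt.sqrt (by simpa using hx)
  simp only [Real.sqrt_sq (norm_nonneg _)] at hsqrt
  refine hsqrt.congr_fderiv ?_
  ext y
  simp only [one_div, mul_inv_rev, smul_apply, coe_innerSL_apply, nsmul_eq_mul, Nat.cast_ofNat,
    smul_eq_mul]
  ring

variable [FiniteDimensional ℝ E]

lemma exists_contDiff_lipschitzWith_eqOn_ball {f : E → ℝ} (hf : ContDiff ℝ 1 f) (R : ℝ) :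
    ∃ g : E → ℝ, ContDiff ℝ 1 g ∧ (∃ K, LipschitzWith K g) ∧ Set.EqOn g f (ball 0 R) := by
  let χ : ContDiffBump (0 : E) := ⟨max R 1, max R 1 + 1, by positivity, by linarith⟩
  have hcont : ContDiff ℝ 1 fun x => χ x * f x := χ.contDiff.mul hf
  refine ⟨_, hcont,
    hcont.lipschitzWith_of_hasCompactSupport χ.hasCompactSupport.mul_right one_ne_zero, ?_⟩
  intro x hx
  have hχ : χ x = 1 := χ.one_of_mem_closedBall
    (closedBall_subset_closedBall (le_max_left R 1) (ball_subset_closedBall hx))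
  simp [hχ]

variable [MeasurableSpace E] [BorelSpace E] (μ : Measure E) [μ.IsAddHaarMeasure]

lemma integral_eq_integral_Ioi_integral_toSphere [Nontrivial E] {F : Type*} [NormedAddCommGroup F]
    [NormedSpace ℝ F] {f : E → F} (hf : Integrable f μ) :
    ∫ x, f x ∂μ = ∫ t in Set.Ioi (0 : ℝ), t ^ (Module.finrank ℝ E - 1) •
      ∫ v : sphere (0 : E) 1, f (t • (v : E)) ∂μ.toSphere := by
  have hpres := (μ.measurePreserving_homeomorphUnitSphereProd).symm
    (homeomorphUnitSphereProd E).toMeasurableEquiv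
  have hemb := (homeomorphUnitSphereProd E).symm.measurableEmbedding
  have hint : Integrable (fun p : sphere (0 : E) 1 × Set.Ioi (0 : ℝ) => f ((p.2 : ℝ) • (p.1 : E)))
      (μ.toSphere.prod (.volumeIoiPow (Module.finrank ℝ E - 1))) := by
    refine (hpres.integrable_comp_emb hemb (g := fun x : ({0}ᶜ : Set E) => f x)).2 ?_
    refine (integrableOn_iff_comap_subtypeVal (measurableSet_singleton 0).compl).1 ?_
    exact hf.integrableOn
  calc ∫ x, f x ∂μ = ∫ x : ({0}ᶜ : Set E), f x ∂(μ.comap (↑)) := by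
        rw [integral_subtype_comap (measurableSet_singleton _).compl f, restrict_compl_singleton]
    _ = ∫ p : sphere (0 : E) 1 × Set.Ioi (0 : ℝ), f ((p.2 : ℝ) • (p.1 : E))
          ∂(μ.toSphere.prod (.volumeIoiPow (Module.finrank ℝ E - 1))) :=
        (hpres.integral_comp hemb fun x : ({0}ᶜ : Set E) => f x).symm
    _ = ∫ t : Set.Ioi (0 : ℝ), ∫ v : sphere (0 : E) 1, f ((t : ℝ) • (v : E)) ∂μ.toSphere
          ∂(.volumeIoiPow (Module.finrank ℝ E - 1)) := integral_prod_symm _ hint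
    _ = _ := by
        simp only [Measure.volumeIoiPow, ENNReal.ofReal]
        rw [integral_withDensity_eq_integral_smul
            (measurable_subtype_coe.pow_const _).real_toNNReal,
          integral_subtype_comap measurableSet_Ioi fun t : ℝ =>
            Real.toNNReal (t ^ (Module.finrank ℝ E - 1)) • ∫ v : sphere (0 : E) 1,
              f (t • (v : E)) ∂μ.toSphere]
        refine setIntegral_congr_fun measurableSet_Ioi fun t ht => ?_
        simp only [NNReal.smul_def, Real.coe_toNNReal _ (pow_nonneg (Set.mem_Ioi.1 ht).le _)]

lemma setIntegral_closedBall_eq_intervalIntegral_toSphere [Nontrivial E] {F : Type*}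
    [NormedAddCommGroup F] [NormedSpace ℝ F] {f : E → F} {R : ℝ} (hR : 0 ≤ R)
    (hf : IntegrableOn f (closedBall 0 R) μ) :
    ∫ x in closedBall 0 R, f x ∂μ = ∫ t in (0 : ℝ)..R, t ^ (Module.finrank ℝ E - 1) •
      ∫ v : sphere (0 : E) 1, f (t • (v : E)) ∂μ.toSphere := by
  have hmem {t : ℝ} (ht : 0 < t) (v : sphere (0 : E) 1) :
      t • (v : E) ∈ closedBall (0 : E) R ↔ t ≤ R := by
    simp [norm_smul, abs_of_pos ht]
  rw [← integral_indicator measurableSet_closedBall,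
    integral_eq_integral_Ioi_integral_toSphere μ (hf.integrable_indicator measurableSet_closedBall),
    intervalIntegral.integral_of_le hR, ← Set.Ioi_inter_Iic,
    ← setIntegral_indicator measurableSet_Iic]
  refine setIntegral_congr_fun measurableSet_Ioi fun t ht => ?_
  by_cases htR : t ≤ R <;> simp [Set.indicator, hmem ht, htR]

lemma ae_lineDeriv_max_sub_norm [Nontrivial E] (R : ℝ) (w : E) :
    ∀ᵐ x ∂μ, lineDeriv ℝ (fun y : E => max (R - ‖y‖) 0) x (-w)
      = (closedBall (0 : E) R).indicator (fun x => ‖x‖⁻¹ * ⟪x, w⟫) x := by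
  have hsphere : ∀ᵐ x ∂μ, x ∉ sphere (0 : E) R :=
    measure_eq_zero_iff_ae_notMem.1 (Measure.addHaar_sphere μ 0 R)
  filter_upwards [μ.ae_ne 0, hsphere] with x hx hxR
  rw [mem_sphere_zero_iff_norm] at hxR
  rcases lt_or_gt_of_ne hxR with hlt | hgt
  · have hev : (fun y : E => max (R - ‖y‖) 0) =ᶠ[nhds x] fun y => R - ‖y‖ := by
      filter_upwards [continuous_norm.continuousAt.eventually_lt_const hlt] with y hy
      exact max_eq_left (by linarith)
    have hderiv := (hasFDerivAt_norm_of_ne_zero hx).const_sub R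
    rw [hev.lineDeriv_eq, hderiv.differentiableAt.lineDeriv_eq_fderiv, hderiv.fderiv,
      Set.indicator_of_mem (by simpa using hlt.le)]
    simp
  · have hev : (fun y : E => max (R - ‖y‖) 0) =ᶠ[nhds x] fun _ => 0 := by
      filter_upwards [continuous_norm.continuousAt.eventually_const_lt hgt] with y hy
      exact max_eq_right (by linarith)
    rw [hev.lineDeriv_eq, Set.indicator_of_notMem (by simpa using hgt)]
    simp [lineDeriv]

lemma setIntegral_sub_norm_mul_fderiv_of_lipschitzWith [Nontrivial E] {f : E → ℝ}
    {K : NNReal} (hf : Differentiable ℝ f) (hK : LipschitzWith K f) (R : ℝ) (w : E) :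
    ∫ x in closedBall 0 R, (R - ‖x‖) * fderiv ℝ f x w ∂μ
      = ∫ x in closedBall 0 R, ‖x‖⁻¹ * ⟪x, w⟫ * f x ∂μ := by
  let tent : E → ℝ := fun x => max (R - ‖x‖) 0
  have htent_of_le {x : E} (hx : R ≤ ‖x‖) : tent x = 0 := max_eq_right (by linarith)
  have htent_lip : LipschitzWith 1 tent := by
    simpa using ((LipschitzWith.const R).sub lipschitzWith_one_norm).max_const 0
  have htent_supp : HasCompactSupport tent :=
    .intro (isCompact_closedBall (0 : E) R) fun x hx =>
      htent_of_le (by simpa using (lt_of_not_ge (mt mem_closedBall.2 hx)).le)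
  calc ∫ x in closedBall 0 R, (R - ‖x‖) * fderiv ℝ f x w ∂μ
      = ∫ x, lineDeriv ℝ f x w * tent x ∂μ := by
        rw [← integral_indicator measurableSet_closedBall]
        refine integral_congr_ae (.of_forall fun x => ?_)
        simp only [(hf x).lineDeriv_eq_fderiv]
        by_cases hx : ‖x‖ ≤ R
        · simp [Set.indicator, tent, hx, mul_comm]
        · simp [Set.indicator, hx, htent_of_le (not_le.1 hx).le]
    _ = ∫ x, lineDeriv ℝ tent x (-w) * f x ∂μ :=
        hK.integral_lineDeriv_mul_eq htent_lip htent_supp w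
    _ = ∫ x in closedBall 0 R, ‖x‖⁻¹ * ⟪x, w⟫ * f x ∂μ := by
        rw [← integral_indicator measurableSet_closedBall]
        refine integral_congr_ae ?_
        filter_upwards [ae_lineDeriv_max_sub_norm μ R w] with x hx
        simp only [tent, hx, Set.indicator, ite_mul, zero_mul]

lemma setIntegral_sub_norm_mul_fderiv [Nontrivial E] {f : E → ℝ} (hf : ContDiff ℝ 1 f) (R : ℝ)
    (w : E) :
    ∫ x in closedBall 0 R, (R - ‖x‖) * fderiv ℝ f x w ∂μ
      = ∫ x in closedBall 0 R, ‖x‖⁻¹ * ⟪x, w⟫ * f x ∂μ := by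
  obtain ⟨g, hg, ⟨K, hK⟩, hgf⟩ := exists_contDiff_lipschitzWith_eqOn_ball hf (R + 1)
  have hev {x : E} (hx : x ∈ closedBall 0 R) : g =ᶠ[nhds x] f :=
    hgf.eventuallyEq_of_mem (isOpen_ball.mem_nhds (closedBall_subset_ball (by linarith) hx))
  have hlip := setIntegral_sub_norm_mul_fderiv_of_lipschitzWith μ
    (hg.differentiable one_ne_zero) hK R w
  convert hlip using 1 <;> refine setIntegral_congr_fun measurableSet_closedBall fun x hx => ?_
  · simp only [(hev hx).fderiv_eq]
  · simp only [(hev hx).eq_of_nhds]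

lemma continuous_integral_toSphere {X F : Type*} [TopologicalSpace X] [FirstCountableTopology X]
    [LocallyCompactSpace X] [NormedAddCommGroup F] [NormedSpace ℝ F] {f : X → E → F}
    (hf : Continuous f.uncurry) :
    Continuous fun x => ∫ v : sphere (0 : E) 1, f x v ∂μ.toSphere := by
  have hf' : Continuous (fun x (v : sphere (0 : E) 1) => f x v).uncurry :=
    hf.comp (continuous_fst.prodMk (continuous_subtype_val.comp continuous_snd))
  simpa using continuous_parametric_integral_of_continuous (μ := μ.toSphere) hf' isCompact_univ

lemma eq_intervalIntegral_of_forall_integral_sub_mul {b c : ℝ → ℝ} (hb : Continuous b)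
    (hc : Continuous c)
    (h : ∀ R > 0, ∫ t in (0 : ℝ)..R, (R - t) * c t = ∫ t in (0 : ℝ)..R, b t) {R : ℝ} (hR : 0 < R) :
    b R = ∫ t in (0 : ℝ)..R, c t := by
  have hderiv_left : HasDerivAt (fun s => s * (∫ t in (0 : ℝ)..s, c t) - ∫ t in (0 : ℝ)..s, t * c t)
      (∫ t in (0 : ℝ)..R, c t) R := by
    refine (((hasDerivAt_id R).mul (hc.integral_hasStrictDerivAt 0 R).hasDerivAt).sub
      ((continuous_id.mul hc).integral_hasStrictDerivAt 0 R).hasDerivAt).congr_deriv ?_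
    simp
  refine HasDerivAt.unique (hb.integral_hasStrictDerivAt 0 R).hasDerivAt
    (hderiv_left.congr_of_eventuallyEq ?_)
  filter_upwards [lt_mem_nhds hR] with s hs
  have hint_const : IntervalIntegrable (fun t => s * c t) volume 0 s :=
    (continuous_const.mul hc).intervalIntegrable _ _
  have hint_id : IntervalIntegrable (fun t => t * c t) volume 0 s :=
    (continuous_id.mul hc).intervalIntegrable _ _
  rw [← h s hs, ← intervalIntegral.integral_const_mul,
    ← intervalIntegral.integral_sub hint_const hint_id]
  simp only [sub_mul]

lemma integrableOn_closedBall_inv_norm_mul_inner_mul {f : E → ℝ} (hf : Continuous f) (R : ℝ)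
    (w : E) : IntegrableOn (fun x => ‖x‖⁻¹ * ⟪x, w⟫ * f x) (closedBall 0 R) μ := by
  have hdom : IntegrableOn (fun x => ‖w‖ * f x) (closedBall 0 R) μ :=
    (continuous_const.mul hf).continuousOn.integrableOn_compact (isCompact_closedBall 0 R)
  refine Integrable.mono hdom (Measurable.aestronglyMeasurable (by fun_prop))
    (.of_forall fun x => ?_)
  have hunit : ‖x‖⁻¹ * |⟪x, w⟫| ≤ ‖w‖ :=
    inv_mul_le_of_le_mul₀ (norm_nonneg x) (norm_nonneg w) (abs_real_inner_le_norm x w)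
  simp only [norm_mul, norm_inv, Real.norm_eq_abs, abs_norm]
  gcongr

theorem setIntegral_closedBall_fderiv [Nontrivial E] {f : E → ℝ} (hf : ContDiff ℝ 1 f) (w : E)
    {R : ℝ} (hR : 0 < R) :
    ∫ x in closedBall 0 R, fderiv ℝ f x w ∂μ = R ^ (Module.finrank ℝ E - 1) *
      ∫ v : sphere (0 : E) 1, ⟪(v : E), w⟫ * f (R • (v : E)) ∂μ.toSphere := by
  let n := Module.finrank ℝ E - 1
  let flux : ℝ → ℝ := fun t => t ^ n *
    ∫ v : sphere (0 : E) 1, ⟪(v : E), w⟫ * f (t • (v : E)) ∂μ.toSphere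
  let slope : ℝ → ℝ := fun t => t ^ n *
    ∫ v : sphere (0 : E) 1, fderiv ℝ f (t • (v : E)) w ∂μ.toSphere
  have hf0 := hf.continuous
  have hf1 : Continuous fun x => fderiv ℝ f x w :=
    (hf.continuous_fderiv one_ne_zero).clm_apply continuous_const
  have hflux : Continuous flux := (continuous_pow n).mul
    (continuous_integral_toSphere μ (f := fun t v => ⟪v, w⟫ * f (t • v)) (by fun_prop))
  have hslope : Continuous slope := (continuous_pow n).mul
    (continuous_integral_toSphere μ (f := fun t v => fderiv ℝ f (t • v) w) (by fun_prop))
  have hint {g : E → ℝ} (hg : Continuous g) (s : ℝ) : IntegrableOn g (closedBall 0 s) μ :=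
    hg.continuousOn.integrableOn_compact (isCompact_closedBall 0 s)
  have hweighted (s : ℝ) (hs : 0 < s) :
      ∫ t in (0 : ℝ)..s, (s - t) * slope t = ∫ t in (0 : ℝ)..s, flux t := by
    have hparts := setIntegral_sub_norm_mul_fderiv μ hf s w
    rw [setIntegral_closedBall_eq_intervalIntegral_toSphere μ hs.le (hint (by fun_prop) s),
      setIntegral_closedBall_eq_intervalIntegral_toSphere μ hs.le
        (integrableOn_closedBall_inv_norm_mul_inner_mul μ hf0 s w)] at hparts
    convert hparts using 1 <;>
      refine intervalIntegral.integral_congr_ae (.of_forall fun t ht => ?_) <;>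
      rw [Set.uIoc_of_le hs.le] at ht
    · simp [slope, n, norm_smul, abs_of_pos ht.1, integral_const_mul, mul_left_comm]
    · simp [flux, n, norm_smul, abs_of_pos ht.1, ht.1.ne', real_inner_smul_left]
  rw [setIntegral_closedBall_eq_intervalIntegral_toSphere μ hR.le (hint hf1 R)]
  exact (eq_intervalIntegral_of_forall_integral_sub_mul hflux hslope hweighted hR).symm

end Divergence

lemma integral_norm_sub_integral_sq_le {Ω F : Type*} [MeasurableSpace Ω] {μ : Measure Ω}
    [IsProbabilityMeasure μ] [NormedAddCommGroup F] [InnerProductSpace ℝ F] [CompleteSpace F]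
    {X : Ω → F} (hX : MemLp X 2 μ) :
    ∫ ω, ‖X ω - ∫ ω', X ω' ∂μ‖ ^ 2 ∂μ ≤ ∫ ω, ‖X ω‖ ^ 2 ∂μ := by
  set m := ∫ ω, X ω ∂μ with hm
  have hint : Integrable X μ := hX.integrable one_le_two
  have hint_sq : Integrable (fun ω => ‖X ω‖ ^ 2) μ := hX.integrable_norm_pow two_ne_zero
  have hint_inner : Integrable (fun ω => 2 * ⟪m, X ω⟫) μ := (hint.const_inner m).const_mul 2
  have hint_sub : Integrable (fun ω => ‖X ω‖ ^ 2 - 2 * ⟪m, X ω⟫) μ := hint_sq.sub hint_inner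
  calc ∫ ω, ‖X ω - m‖ ^ 2 ∂μ = ∫ ω, (‖X ω‖ ^ 2 - 2 * ⟪m, X ω⟫ + ‖m‖ ^ 2) ∂μ := by
        simp only [norm_sub_sq_real, real_inner_comm m]
    _ = ∫ ω, ‖X ω‖ ^ 2 ∂μ - 2 * ⟪m, m⟫ + ‖m‖ ^ 2 := by
        rw [integral_add hint_sub (integrable_const _),
          integral_sub hint_sq hint_inner, integral_const_mul, integral_inner hint, ← hm]
        simp
    _ ≤ ∫ ω, ‖X ω‖ ^ 2 ∂μ := by
        rw [real_inner_self_eq_norm_sq]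
        linarith [sq_nonneg ‖m‖]

lemma norm_sub_sub_fderiv_le_of_norm_fderiv_sub_le {E F : Type*} [NormedAddCommGroup E]
    [NormedSpace ℝ E] [NormedAddCommGroup F] [NormedSpace ℝ F] {f : E → F} {L : ℝ} {x : E}
    (hf : Differentiable ℝ f) (hL : ∀ y, ‖fderiv ℝ f y - fderiv ℝ f x‖ ≤ L * ‖y - x‖) (w : E) :
    ‖f (x + w) - f x - fderiv ℝ f x w‖ ≤ L / 2 * ‖w‖ ^ 2 := by
  have hrem (t : ℝ) : HasDerivAt (fun s : ℝ => f (x + s • w) - f x - s • fderiv ℝ f x w)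
      ((fderiv ℝ f (x + t • w) - fderiv ℝ f x) w) t := by
    have hline : HasDerivAt (fun s : ℝ => x + s • w) w t := by
      simpa using ((hasDerivAt_id t).smul_const w).const_add x
    have hcomp := (hf (x + t • w)).hasFDerivAt.comp_hasDerivAt t hline
    refine ((hcomp.sub_const (f x)).sub
      ((hasDerivAt_id t).smul_const (fderiv ℝ f x w))).congr_deriv ?_
    simp
  have hbound (t : ℝ) :
      HasDerivAt (fun s : ℝ => L / 2 * ‖w‖ ^ 2 * s ^ 2) (L * ‖w‖ ^ 2 * t) t := by
    refine ((hasDerivAt_pow 2 t).const_mul (L / 2 * ‖w‖ ^ 2)).congr_deriv ?_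
    simp only [Nat.cast_ofNat, Nat.add_one_sub_one, pow_one]
    ring
  have hrem_le (t : ℝ) (ht : t ∈ Set.Ico (0 : ℝ) 1) :
      ‖(fderiv ℝ f (x + t • w) - fderiv ℝ f x) w‖ ≤ L * ‖w‖ ^ 2 * t := by
    calc ‖(fderiv ℝ f (x + t • w) - fderiv ℝ f x) w‖
        ≤ L * ‖x + t • w - x‖ * ‖w‖ := ContinuousLinearMap.le_of_opNorm_le _ (hL _) w
      _ = L * ‖w‖ ^ 2 * t := by
        rw [add_sub_cancel_left, norm_smul, Real.norm_of_nonneg ht.1]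
        ring
  simpa using image_norm_le_of_norm_deriv_right_le_deriv_boundary
    (fun t _ => (hrem t).continuousAt.continuousWithinAt)
    (fun t _ => (hrem t).hasDerivWithinAt) (by simp) hbound hrem_le
    (Set.right_mem_Icc.2 zero_le_one)

lemma abs_sub_le_of_norm_gradient_sub_le {E : Type*} [NormedAddCommGroup E]
    [InnerProductSpace ℝ E] [CompleteSpace E] {f : E → ℝ} {L : ℝ} {x : E}
    (hf : Differentiable ℝ f) (hL : ∀ y, ‖gradient f y - gradient f x‖ ≤ L * ‖y - x‖) (w : E) :
    |f (x + w) - f x| ≤ |⟪gradient f x, w⟫| + L / 2 * ‖w‖ ^ 2 := by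
  have htaylor := norm_sub_sub_fderiv_le_of_norm_fderiv_sub_le hf (x := x) (L := L)
    (fun y => by
      simpa only [gradient, ← map_sub, LinearIsometryEquiv.norm_map] using hL y) w
  rw [← inner_gradient_left, Real.norm_eq_abs] at htaylor
  linarith [abs_sub_abs_le_abs_sub (f (x + w) - f x) ⟪gradient f x, w⟫]

lemma norm_gradient_le_of_abs_sub_le {E : Type*} [NormedAddCommGroup E] [InnerProductSpace ℝ E]
    [CompleteSpace E] [Nontrivial E] {f : E → ℝ} {G : ℝ}
    (hG : ∀ x y, |f x - f y| ≤ G * ‖x - y‖) (x : E) : ‖gradient f x‖ ≤ G := by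
  obtain ⟨u, hu⟩ := exists_ne (0 : E)
  have hG_nonneg : 0 ≤ G := nonneg_of_mul_nonneg_left
    ((abs_nonneg _).trans (by simpa using hG u 0)) (norm_pos_iff.2 hu)
  rw [gradient, LinearIsometryEquiv.norm_map]
  exact norm_fderiv_le_of_lip' ℝ hG_nonneg (.of_forall fun y => hG y x)

lemma hasFDerivAt_setIntegral_of_continuous {X E F : Type*} [TopologicalSpace X]
    [SecondCountableTopology X] [MeasurableSpace X] [OpensMeasurableSpace X] {μ : Measure X}
    [IsFiniteMeasureOnCompacts μ] [NormedAddCommGroup E] [NormedSpace ℝ E] [ProperSpace E]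
    [NormedAddCommGroup F] [NormedSpace ℝ F]
    {f : E → X → F} {f' : E → X → E →L[ℝ] F} {K : Set X}
    (hK : IsCompact K) (hKm : MeasurableSet K)
    (hf : ∀ x, Continuous (f x)) (hf' : Continuous f'.uncurry)
    (hderiv : ∀ x a, HasFDerivAt (fun y => f y a) (f' x a) x) (x : E) :
    HasFDerivAt (fun y => ∫ a in K, f y a ∂μ) (∫ a in K, f' x a ∂μ) x := by
  have hfinite : IsFiniteMeasure (μ.restrict K) :=
    isFiniteMeasure_restrict.2 hK.measure_lt_top.ne
  obtain ⟨C, hC⟩ := ((isCompact_closedBall x 1).prod hK).exists_bound_of_continuousOn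
    hf'.continuousOn
  refine hasFDerivAt_integral_of_dominated_of_fderiv_le (bound := fun _ => C) (F' := f')
    (closedBall_mem_nhds x one_pos) (.of_forall fun y => (hf y).aestronglyMeasurable) ?_
    (Continuous.aestronglyMeasurable (by fun_prop)) ?_ (integrable_const C)
    (.of_forall fun a y _ => hderiv y a)
  · obtain ⟨B, hB⟩ := hK.exists_bound_of_continuousOn (hf x).continuousOn
    exact .of_bound (hf x).aestronglyMeasurable B ((ae_restrict_mem hKm).mono hB)
  · filter_upwards [ae_restrict_mem hKm] with a ha y hy
    exact hC (y, a) ⟨hy, ha⟩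

section UniformMeasures

variable {d : ℕ}

lemma integral_ballUniform {F : Type*} [NormedAddCommGroup F] [NormedSpace ℝ F] (f : Euc d → F) :
    ∫ u, f u ∂ballUniform d
      = (volume.real (closedBall (0 : Euc d) 1))⁻¹ • ∫ u in closedBall (0 : Euc d) 1, f u := by
  rw [ballUniform, integral_smul_measure, ENNReal.toReal_inv, measureReal_def]

instance isProbabilityMeasure_ballUniform : IsProbabilityMeasure (ballUniform d) := by
  refine ⟨?_⟩
  rw [ballUniform, Measure.smul_apply, Measure.restrict_apply_univ, smul_eq_mul]
  exact ENNReal.inv_mul_cancel (measure_closedBall_pos volume _ one_pos).ne'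
    measure_closedBall_lt_top.ne

lemma ae_norm_eq_one_sphereUniform : ∀ᵐ v ∂sphereUniform d, ‖v‖ = 1 := by
  refine Measure.ae_smul_measure ?_ _
  rw [ae_map_iff measurable_subtype_coe.aemeasurable
    (measurableSet_eq_fun measurable_norm measurable_const)]
  exact .of_forall norm_eq_of_mem_sphere

variable [NeZero d]

lemma integral_sphereUniform {F : Type*} [NormedAddCommGroup F] [NormedSpace ℝ F]
    (f : Euc d → F) :
    ∫ v, f v ∂sphereUniform d = (d * volume.real (closedBall (0 : Euc d) 1))⁻¹ •
      ∫ v : sphere (0 : Euc d) 1, f v ∂(volume : Measure (Euc d)).toSphere := by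
  have hemb : MeasurableEmbedding (Subtype.val : sphere (0 : Euc d) 1 → Euc d) :=
    .subtype_coe isClosed_sphere.measurableSet
  rw [sphereUniform, integral_smul_measure, hemb.integral_map, ENNReal.toReal_inv,
    ← measureReal_def, Measure.toSphere_real_apply_univ, finrank_euclideanSpace_fin,
    measureReal_def, measureReal_def, Measure.addHaar_closedBall_eq_addHaar_ball]

instance isProbabilityMeasure_sphereUniform : IsProbabilityMeasure (sphereUniform d) := by
  refine ⟨?_⟩
  rw [sphereUniform, Measure.smul_apply, Measure.map_apply measurable_subtype_coe .univ,
    Set.preimage_univ, smul_eq_mul]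
  exact ENNReal.inv_mul_cancel (Measure.measure_univ_ne_zero.2 (Measure.toSphere_ne_zero _))
    (measure_ne_top _ _)

lemma memLp_sphereUniform_of_continuous {F : Type*} [NormedAddCommGroup F]
    {f : Euc d → F} (hf : Continuous f) (p : ℝ≥0∞) : MemLp f p (sphereUniform d) := by
  obtain ⟨C, hC⟩ := (isCompact_sphere (0 : Euc d) 1).exists_bound_of_continuousOn hf.continuousOn
  refine .of_bound hf.aestronglyMeasurable C ?_
  filter_upwards [ae_norm_eq_one_sphereUniform] with v hv
  exact hC v (by simpa using hv)

theorem integral_ballUniform_fderiv {f : Euc d → ℝ} (hf : ContDiff ℝ 1 f) (w : Euc d) :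
    ∫ u, fderiv ℝ f u w ∂ballUniform d = d * ∫ v, ⟪v, w⟫ * f v ∂sphereUniform d := by
  have hd : (d : ℝ) ≠ 0 := NeZero.ne _
  rw [integral_ballUniform, integral_sphereUniform,
    setIntegral_closedBall_fderiv volume hf w one_pos]
  simp only [one_pow, one_mul, one_smul, smul_eq_mul]
  field_simp

lemma integral_inner_sq_sphereUniform (g : Euc d) :
    d * ∫ v, ⟪g, v⟫ ^ 2 ∂sphereUniform d = ‖g‖ ^ 2 := by
  have hdiv := integral_ballUniform_fderiv (innerSL ℝ g).contDiff g
  simp only [ContinuousLinearMap.fderiv, innerSL_apply_apply, integral_const, probReal_univ,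
    one_smul, real_inner_self_eq_norm_sq] at hdiv
  simp only [hdiv, sq, real_inner_comm g]

end UniformMeasures

section Estimator

variable {d : ℕ} {h : Euc d → ℝ} {r : ℝ}

/-- The ball smoothing `h^r(z) = E_{u ∼ U(B_d)}[h(z + r u)]` of `h`, whose gradient the two-point
estimator estimates. -/
def ballSmoothing (h : Euc d → ℝ) (r : ℝ) (z : Euc d) : ℝ :=
  ∫ u, h (z + r • u) ∂ballUniform d

/-- The two-point gradient estimator `G_h(z; r; v) = (d / r) (h(z + r v) - h(z)) v` in the
direction `v`. -/
def twoPointEstimator (h : Euc d → ℝ) (z : Euc d) (r : ℝ) (v : Euc d) : Euc d :=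
  ((d : ℝ) / r * (h (z + r • v) - h z)) • v

lemma continuous_twoPointEstimator (hh : Continuous h) (z : Euc d) (r : ℝ) :
    Continuous (twoPointEstimator h z r) := by
  unfold twoPointEstimator
  fun_prop

lemma fderiv_ballSmoothing_apply (hh : ContDiff ℝ 1 h) (r : ℝ) (z w : Euc d) :
    fderiv ℝ (ballSmoothing h r) z w = ∫ u, fderiv ℝ h (z + r • u) w ∂ballUniform d := by
  have hfderiv : Continuous (fderiv ℝ h) := hh.continuous_fderiv one_ne_zero
  have hderiv : HasFDerivAt (fun y => ∫ u in closedBall (0 : Euc d) 1, h (y + r • u))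
      (∫ u in closedBall (0 : Euc d) 1, fderiv ℝ h (z + r • u)) z :=
    hasFDerivAt_setIntegral_of_continuous (isCompact_closedBall 0 1) measurableSet_closedBall
      (fun y => hh.continuous.comp (by fun_prop)) (f' := fun y u => fderiv ℝ h (y + r • u))
      (hfderiv.comp (by fun_prop))
      (fun y u => (hasFDerivAt_comp_add_right (r • u)).2
        (hh.differentiable one_ne_zero (y + r • u)).hasFDerivAt) z
  have hint : Integrable (fun u => fderiv ℝ h (z + r • u))
      (volume.restrict (closedBall (0 : Euc d) 1)) :=
    (hfderiv.comp (by fun_prop)).continuousOn.integrableOn_compact (isCompact_closedBall 0 1)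
  have hsmoothing : ballSmoothing h r = fun y => (volume.real (closedBall (0 : Euc d) 1))⁻¹ •
      ∫ u in closedBall (0 : Euc d) 1, h (y + r • u) :=
    funext fun y => integral_ballUniform _
  rw [hsmoothing, (hderiv.fun_const_smul _).fderiv, integral_ballUniform,
    smul_apply, ContinuousLinearMap.integral_apply hint]

theorem gradient_ballSmoothing [NeZero d] (hh : ContDiff ℝ 1 h) (hr : r ≠ 0) (z : Euc d) :
    gradient (ballSmoothing h r) z = ∫ v, twoPointEstimator h z r v ∂sphereUniform d := by
  let quotient : Euc d → ℝ := fun u => r⁻¹ * (h (z + r • u) - h z)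
  have hquotient : ContDiff ℝ 1 quotient := by fun_prop
  have hquotient_fderiv (u : Euc d) : fderiv ℝ quotient u = fderiv ℝ h (z + r • u) := by
    have hline : HasFDerivAt (fun u : Euc d => z + r • u) (r • .id ℝ (Euc d)) u :=
      ((hasFDerivAt_id u).const_smul r).const_add z
    have hcomp := (hh.differentiable one_ne_zero (z + r • u)).hasFDerivAt.comp u hline
    refine (((hcomp.sub_const (h z)).const_mul r⁻¹).congr_fderiv ?_).fderiv
    ext y
    simp [hr]
  have hint : Integrable (twoPointEstimator h z r) (sphereUniform d) := memLp_one_iff_integrable.1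
    (memLp_sphereUniform_of_continuous (continuous_twoPointEstimator hh.continuous z r) 1)
  refine ext_inner_right ℝ fun w => ?_
  calc ⟪gradient (ballSmoothing h r) z, w⟫ = ∫ u, fderiv ℝ quotient u w ∂ballUniform d := by
        simp only [inner_gradient_left, fderiv_ballSmoothing_apply hh, hquotient_fderiv]
    _ = d * ∫ v, ⟪v, w⟫ * quotient v ∂sphereUniform d := integral_ballUniform_fderiv hquotient w
    _ = ∫ v, ⟪w, twoPointEstimator h z r v⟫ ∂sphereUniform d := by
        rw [← integral_const_mul]
        refine integral_congr_ae (.of_forall fun v => ?_)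
        simp only [quotient, twoPointEstimator, real_inner_smul_right, real_inner_comm v w]
        ring
    _ = ⟪∫ v, twoPointEstimator h z r v ∂sphereUniform d, w⟫ := by
        rw [integral_inner hint, real_inner_comm]

lemma norm_twoPointEstimator_sq_le (hh : Differentiable ℝ h) {L : ℝ} {z : Euc d}
    (hL : ∀ y, ‖gradient h y - gradient h z‖ ≤ L * ‖y - z‖) (hr : 0 < r) {v : Euc d}
    (hv : ‖v‖ = 1) :
    ‖twoPointEstimator h z r v‖ ^ 2
      ≤ d ^ 2 * (3 / 2 * ⟪gradient h z, v⟫ ^ 2 + 3 / 4 * L ^ 2 * r ^ 2) := by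
  have hdiff : |h (z + r • v) - h z| ≤ r * (|⟪gradient h z, v⟫| + L / 2 * r) := by
    refine (abs_sub_le_of_norm_gradient_sub_le hh hL (r • v)).trans_eq ?_
    rw [real_inner_smul_right, abs_mul, norm_smul, hv, Real.norm_of_nonneg hr.le, abs_of_pos hr]
    ring
  have hnorm : ‖twoPointEstimator h z r v‖ ≤ d * (|⟪gradient h z, v⟫| + L / 2 * r) := by
    calc ‖twoPointEstimator h z r v‖ = d / r * |h (z + r • v) - h z| := by
          simp [twoPointEstimator, norm_smul, hv, abs_of_pos hr]
      _ ≤ d / r * (r * (|⟪gradient h z, v⟫| + L / 2 * r)) := by gcongr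
      _ = d * (|⟪gradient h z, v⟫| + L / 2 * r) := by field_simp
  calc ‖twoPointEstimator h z r v‖ ^ 2 ≤ (d * (|⟪gradient h z, v⟫| + L / 2 * r)) ^ 2 := by gcongr
    _ = d ^ 2 * (|⟪gradient h z, v⟫| + L / 2 * r) ^ 2 := mul_pow _ _ 2
    _ ≤ d ^ 2 * (3 / 2 * |⟪gradient h z, v⟫| ^ 2 + 3 * (L / 2 * r) ^ 2) := by
        gcongr
        linarith [sq_nonneg (|⟪gradient h z, v⟫| - 2 * (L / 2 * r))]
    _ = d ^ 2 * (3 / 2 * ⟪gradient h z, v⟫ ^ 2 + 3 / 4 * L ^ 2 * r ^ 2) := by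
        rw [sq_abs]
        ring

theorem integral_norm_twoPointEstimator_sq_le [NeZero d] (hh : ContDiff ℝ 1 h) {L : ℝ} {z : Euc d}
    (hL : ∀ y, ‖gradient h y - gradient h z‖ ≤ L * ‖y - z‖) (hr : 0 < r) :
    ∫ v, ‖twoPointEstimator h z r v‖ ^ 2 ∂sphereUniform d
      ≤ 3 / 2 * d * ‖gradient h z‖ ^ 2 + 3 / 4 * d ^ 2 * L ^ 2 * r ^ 2 := by
  have hint_inner : Integrable (fun v => 3 / 2 * ⟪gradient h z, v⟫ ^ 2) (sphereUniform d) :=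
    memLp_one_iff_integrable.1 (memLp_sphereUniform_of_continuous (by fun_prop) 1)
  have hint_est : Integrable (fun v => ‖twoPointEstimator h z r v‖ ^ 2) (sphereUniform d) :=
    memLp_one_iff_integrable.1 (memLp_sphereUniform_of_continuous
      ((continuous_twoPointEstimator hh.continuous z r).norm.pow 2) 1)
  calc ∫ v, ‖twoPointEstimator h z r v‖ ^ 2 ∂sphereUniform d
      ≤ ∫ v, d ^ 2 * (3 / 2 * ⟪gradient h z, v⟫ ^ 2 + 3 / 4 * L ^ 2 * r ^ 2) ∂sphereUniform d := by
        refine integral_mono_ae hint_est ((hint_inner.add (integrable_const _)).const_mul _) ?_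
        filter_upwards [ae_norm_eq_one_sphereUniform] with v hv
        exact norm_twoPointEstimator_sq_le (hh.differentiable one_ne_zero) hL hr hv
    _ = 3 / 2 * d * (d * ∫ v, ⟪gradient h z, v⟫ ^ 2 ∂sphereUniform d)
        + 3 / 4 * d ^ 2 * L ^ 2 * r ^ 2 := by
        rw [integral_const_mul, integral_add hint_inner (integrable_const _), integral_const_mul,
          integral_const, probReal_univ, one_smul]
        ring
    _ = 3 / 2 * d * ‖gradient h z‖ ^ 2 + 3 / 4 * d ^ 2 * L ^ 2 * r ^ 2 := by
        rw [integral_inner_sq_sphereUniform]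

end Estimator

theorem two_point_estimator_variance_bound_general {d : ℕ} (hd : 0 < d) {h : Euc d → ℝ} {L : ℝ}
    (hC1 : ContDiff ℝ 1 h) {z : Euc d}
    (hsmooth : ∀ y, ‖gradient h y - gradient h z‖ ≤ L * ‖y - z‖) {r : ℝ} (hr : 0 < r) :
    ∫ v, ‖twoPointEstimator h z r v - gradient (ballSmoothing h r) z‖ ^ 2 ∂sphereUniform d
      ≤ 9 * d ^ 2 * ‖gradient h z‖ ^ 2 / (d + 2) + 3 * d ^ 2 * L ^ 2 * r ^ 2 / 4 := by
  have : NeZero d := ⟨hd.ne'⟩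
  have hd_one : (1 : ℝ) ≤ d := mod_cast hd
  calc ∫ v, ‖twoPointEstimator h z r v - gradient (ballSmoothing h r) z‖ ^ 2 ∂sphereUniform d
      ≤ ∫ v, ‖twoPointEstimator h z r v‖ ^ 2 ∂sphereUniform d := by
        rw [gradient_ballSmoothing hC1 hr.ne' z]
        exact integral_norm_sub_integral_sq_le (memLp_sphereUniform_of_continuous
          (continuous_twoPointEstimator hC1.continuous z r) 2)
    _ ≤ 3 / 2 * d * ‖gradient h z‖ ^ 2 + 3 / 4 * d ^ 2 * L ^ 2 * r ^ 2 :=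
        integral_norm_twoPointEstimator_sq_le hC1 hsmooth hr
    _ ≤ 9 * d ^ 2 / (d + 2) * ‖gradient h z‖ ^ 2 + 3 / 4 * d ^ 2 * L ^ 2 * r ^ 2 := by
        gcongr
        rw [le_div_iff₀ (by positivity)]
        nlinarith
    _ = 9 * d ^ 2 * ‖gradient h z‖ ^ 2 / (d + 2) + 3 * d ^ 2 * L ^ 2 * r ^ 2 / 4 := by ring

/-- **Variance bound for the two-point gradient estimator.**
If `h : ℝ^d → ℝ` is continuously differentiable, `G`-Lipschitz and `L`-smooth, `r > 0`,
`h^r(z) = E_{v̄ ∼ U(B_d)}[h(z + r v̄)]` and `G_h(z;r;v) = (d/r)(h(z + r v) - h(z)) v`, then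
`E_{v ∼ U(S^{d-1})}[‖G_h(z;r;v) - ∇h^r(z)‖²] ≤ 9 d² G²/(d+2) + 3 d² L² r²/4` for every `z`. -/
theorem two_point_estimator_variance_bound
    {d : ℕ} (hd : 0 < d) (h : Euc d → ℝ) (G L : ℝ)
    (hC1 : ContDiff ℝ 1 h)
    (hLip : ∀ z₁ z₂ : Euc d, |h z₁ - h z₂| ≤ G * ‖z₁ - z₂‖)
    (hsmooth : ∀ z₁ z₂ : Euc d, ‖gradient h z₁ - gradient h z₂‖ ≤ L * ‖z₁ - z₂‖)
    (r : ℝ) (hr : 0 < r) (z : Euc d) :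
    (∫ v, ‖(((d : ℝ) / r) * (h (z + r • v) - h z)) • v
        - gradient (fun z' => ∫ u, h (z' + r • u) ∂(ballUniform d)) z‖ ^ 2
      ∂(sphereUniform d))
      ≤ 9 * (d : ℝ) ^ 2 * G ^ 2 / ((d : ℝ) + 2) + 3 * (d : ℝ) ^ 2 * L ^ 2 * r ^ 2 / 4 := by
  have : NeZero d := ⟨hd.ne'⟩
  exact (two_point_estimator_variance_bound_general hd hC1 (fun y => hsmooth y z) hr).trans
    (by gcongr; exact norm_gradient_le_of_abs_sub_le hLip z)

end
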